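/- For every p ∈ [1,∞] there is a constant c > 0, depending only on f, D and p, such that for every ν ∈ (0,1], the time average { |u(t)|_{L^p}² } over [T₁,T₂] satisfies { |u(t)|_{L^p}² } ≥ c. -/

import Mathlib

open MeasureTheory Set
open scoped ENNReal

/-- The `L^p` norm (on the circle, i.e. over one period `(0,1]`) of the `m`-th
derivative of a function `v : ℝ → ℝ` (identified with a function on `S¹ = ℝ/ℤ`). -/
noncomputable def sobLp (m : ℕ) (p : ℝ≥0∞) (v : ℝ → ℝ) : ℝ :=
  (eLpNorm (iteratedDeriv m v) p (volume.restrict (Ioc (0:ℝ) 1))).toReal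

/-- `u` is a smooth, space-periodic, zero-mean-value solution of the generalised
Burgers equation `u_t + f'(u) u_x - ν u_xx = 0` with strongly convex `f` and
nonzero initial condition. -/
structure IsBurgersSolution (f : ℝ → ℝ) (σ ν : ℝ) (u : ℝ → ℝ → ℝ) : Prop where
  hf : ContDiff ℝ (⊤ : ℕ∞) f
  hσ : 0 < σ
  hconv : ∀ y, σ ≤ iteratedDeriv 2 f y
  hν : 0 < ν
  hu : ContDiffOn ℝ (⊤ : ℕ∞) (Function.uncurry u) (Ici (0:ℝ) ×ˢ univ)
  hper : ∀ t x, u t (x + 1) = u t x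
  hpde : ∀ t, 0 < t → ∀ x,
    deriv (fun s => u s x) t + deriv f (u t x) * deriv (u t) x
      - ν * deriv (deriv (u t)) x = 0
  hmean : ∀ t, 0 ≤ t → ∫ x in Ioc (0:ℝ) 1, u t x = 0
  hinit : ∃ x, u 0 x ≠ 0

/-- The quantity `D = max(|u₀|₁⁻¹, |u₀|_{1,∞})`. -/
noncomputable def burgersD (u : ℝ → ℝ → ℝ) : ℝ :=
  max (sobLp 0 1 (u 0))⁻¹ (sobLp 1 ⊤ (u 0))

/-- `T₁ = D⁻² C̃⁻¹ / 4`. -/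
noncomputable def burgersT₁ (D Ct : ℝ) : ℝ := (D ^ 2)⁻¹ * Ct⁻¹ / 4

/-- `T₂ = max(3T₁/2, 2Dσ⁻¹)`. -/
noncomputable def burgersT₂ (σ D Ct : ℝ) : ℝ :=
  max (3 / 2 * burgersT₁ D Ct) (2 * D * σ⁻¹)

/-- Time average over `[T₁, T₂]`. -/
noncomputable def timeAvg (T₁ T₂ : ℝ) (A : ℝ → ℝ) : ℝ :=
  (T₂ - T₁)⁻¹ * ∫ t in T₁..T₂, A t

/-- The structure function `S_p(ℓ)`. -/
noncomputable def structFun (T₁ T₂ : ℝ) (u : ℝ → ℝ → ℝ) (p ℓ : ℝ) : ℝ :=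
  timeAvg T₁ T₂ (fun t => ∫ x in Ioc (0:ℝ) 1, |u t (x + ℓ) - u t x| ^ p)

/-!
The energy identity `d/dt ‖u(t)‖²_{L²} = -2 ν ‖u_x(t)‖²_{L²}` and the bound `ν ‖u_x(t)‖²_{L²} ≤ C̃`
limit the energy lost up to time `3 T₁ / 2` to `3 C̃ T₁ = 3 / (4 D²)`. The initial energy is at
least `‖u₀‖²_{L¹} ≥ D⁻²`, so at least `D⁻² / 4` is left. By the maximum principle `|u| ≤ D`, hence
`‖u(t)‖²_{L²} ≤ D ‖u(t)‖_{L¹}`, and therefore `‖u(t)‖_{Lᵖ} ≥ ‖u(t)‖_{L¹} ≥ D⁻³ / 4` for all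
`t ∈ [T₁, 3 T₁ / 2]`, an interval contained in `[T₁, T₂]`.
-/

section SobLp

variable {m : ℕ} {p q : ℝ≥0∞} {v w : ℝ → ℝ}

lemma memLp_restrict_Ioc_of_continuous (p : ℝ≥0∞) (hv : Continuous v) (a b : ℝ) :
    MemLp v p (volume.restrict (Ioc a b)) := by
  obtain ⟨C, hC⟩ := (isCompact_Icc (a := a) (b := b)).exists_bound_of_continuousOn hv.continuousOn
  exact MemLp.of_bound hv.aestronglyMeasurable C
    (ae_restrict_of_forall_mem measurableSet_Ioc fun x hx => hC x (Ioc_subset_Icc_self hx))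

lemma sobLp_mono_exponent (hv : Continuous (iteratedDeriv m v)) (hpq : p ≤ q) :
    sobLp m p v ≤ sobLp m q v := by
  have : IsProbabilityMeasure (volume.restrict (Ioc (0 : ℝ) 1)) := ⟨by simp⟩
  exact ENNReal.toReal_mono (memLp_restrict_Ioc_of_continuous q hv 0 1).eLpNorm_ne_top
    (eLpNorm_le_eLpNorm_of_exponent_le hpq hv.aestronglyMeasurable)

lemma sobLp_one_eq_integral (hv : Continuous (iteratedDeriv m v)) :
    sobLp m 1 v = ∫ x in (0 : ℝ)..1, |iteratedDeriv m v x| := by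
  rw [sobLp, toReal_eLpNorm hv.aestronglyMeasurable,
    lpNorm_one_eq_integral_norm hv.aestronglyMeasurable,
    intervalIntegral.integral_of_le zero_le_one]
  simp only [Real.norm_eq_abs]

lemma sobLp_two_sq_eq_integral (hv : Continuous (iteratedDeriv m v)) :
    sobLp m 2 v ^ 2 = ∫ x in (0 : ℝ)..1, iteratedDeriv m v x ^ 2 := by
  have hsq : 0 ≤ ∫ x in Ioc (0 : ℝ) 1, iteratedDeriv m v x ^ 2 :=
    integral_nonneg fun x => sq_nonneg _
  rw [sobLp, (memLp_restrict_Ioc_of_continuous 2 hv 0 1).eLpNorm_eq_integral_rpow_norm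
    two_ne_zero ENNReal.ofNat_ne_top, intervalIntegral.integral_of_le zero_le_one]
  simp only [ENNReal.toReal_ofNat, Real.norm_eq_abs, Real.rpow_ofNat, sq_abs]
  rw [ENNReal.toReal_ofReal (Real.rpow_nonneg hsq _), ← Real.rpow_mul_natCast hsq]
  norm_num

lemma sobLp_two_sq_le_mul_sobLp_one {M : ℝ} (hv : Continuous (iteratedDeriv m v))
    (hM : ∀ x ∈ Icc (0 : ℝ) 1, |iteratedDeriv m v x| ≤ M) :
    sobLp m 2 v ^ 2 ≤ M * sobLp m 1 v := by
  rw [sobLp_two_sq_eq_integral hv, sobLp_one_eq_integral hv, ← intervalIntegral.integral_const_mul]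
  refine intervalIntegral.integral_mono_on zero_le_one ((hv.pow 2).intervalIntegrable _ _)
    ((continuous_const.mul hv.abs).intervalIntegrable _ _) fun x hx => ?_
  rw [← sq_abs, sq]
  exact mul_le_mul_of_nonneg_right (hM x hx) (abs_nonneg _)

lemma sobLp_le_sobLp_add {C : ℝ} (hp : 1 ≤ p) (hv : Continuous (iteratedDeriv m v))
    (hw : Continuous (iteratedDeriv m w))
    (h : ∀ x ∈ Ioc (0 : ℝ) 1, |iteratedDeriv m v x - iteratedDeriv m w x| ≤ C) :
    sobLp m p v ≤ sobLp m p w + C := by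
  have hC : 0 ≤ C := (abs_nonneg _).trans (h 1 (right_mem_Ioc.2 zero_lt_one))
  set μ := volume.restrict (Ioc (0 : ℝ) 1)
  have htriangle : eLpNorm (iteratedDeriv m v) p μ ≤
      eLpNorm (iteratedDeriv m w) p μ + eLpNorm (iteratedDeriv m v - iteratedDeriv m w) p μ := by
    simpa only [add_sub_cancel] using
      eLpNorm_add_le hw.aestronglyMeasurable (hv.sub hw).aestronglyMeasurable hp
  have hdiff : eLpNorm (iteratedDeriv m v - iteratedDeriv m w) p μ ≤ ENNReal.ofReal C := by
    simpa [μ] using eLpNorm_le_of_ae_bound (p := p) (μ := μ)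
      (f := iteratedDeriv m v - iteratedDeriv m w) (ae_restrict_of_forall_mem measurableSet_Ioc h)
  have hfin := (memLp_restrict_Ioc_of_continuous p hw 0 1).eLpNorm_ne_top
  have := ENNReal.toReal_mono (ENNReal.add_ne_top.2 ⟨hfin, ENNReal.ofReal_ne_top⟩)
    (htriangle.trans (add_le_add_right hdiff _))
  rwa [ENNReal.toReal_add hfin ENNReal.ofReal_ne_top, ENNReal.toReal_ofReal hC] at this

lemma continuousOn_sobLp {X : Type*} [TopologicalSpace X] {F : X → ℝ → ℝ} {s : Set X} (hp : 1 ≤ p)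
    (hF : ContinuousOn (Function.uncurry fun t => iteratedDeriv m (F t)) (s ×ˢ univ)) :
    ContinuousOn (fun t => sobLp m p (F t)) s := by
  have hslice : ∀ t ∈ s, Continuous (iteratedDeriv m (F t)) := fun t ht =>
    hF.comp_continuous (f := fun x => (t, x)) (by fun_prop) fun x => ⟨ht, mem_univ x⟩
  intro t ht
  refine Metric.tendsto_nhds.2 fun ε hε => ?_
  obtain ⟨V, hV, hclose⟩ := (isCompact_Icc (a := (0 : ℝ)) (b := 1)).mem_uniformity_of_prod
    (hF.mono (prod_mono_right (subset_univ _))) ht (Metric.dist_mem_uniformity (half_pos hε))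
  filter_upwards [hV, self_mem_nhdsWithin] with r hrV hrs
  have hrt : ∀ x ∈ Ioc (0 : ℝ) 1,
      |iteratedDeriv m (F r) x - iteratedDeriv m (F t) x| ≤ ε / 2 := fun x hx =>
    (hclose r hrV x (Ioc_subset_Icc_self hx)).le
  have htr : ∀ x ∈ Ioc (0 : ℝ) 1,
      |iteratedDeriv m (F t) x - iteratedDeriv m (F r) x| ≤ ε / 2 := fun x hx =>
    (abs_sub_comm _ _).trans_le (hrt x hx)
  have hupper := sobLp_le_sobLp_add hp (hslice r hrs) (hslice t ht) hrt
  have hlower := sobLp_le_sobLp_add hp (hslice t ht) (hslice r hrs) htr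
  rw [Real.dist_eq, abs_lt]
  constructor <;> linarith

lemma sobLp_zero_one_pos (hv : Continuous v) (hper : Function.Periodic v 1) (hne : ∃ x, v x ≠ 0) :
    0 < sobLp 0 1 v := by
  obtain ⟨x, hx⟩ := hne
  obtain ⟨y, hy, hxy⟩ := hper.exists_mem_Ico₀ one_pos x
  rw [sobLp_one_eq_integral (by simpa using hv), iteratedDeriv_zero]
  exact intervalIntegral.integral_pos zero_lt_one hv.abs.continuousOn (fun _ _ => abs_nonneg _)
    ⟨y, Ico_subset_Icc_self hy, abs_pos.2 (hxy ▸ hx)⟩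

lemma abs_sub_le_sobLp_one_one (hv : ContDiff ℝ 1 v) {a b : ℝ} (ha : a ∈ Icc (0 : ℝ) 1)
    (hb : b ∈ Icc (0 : ℝ) 1) : |v b - v a| ≤ sobLp 1 1 v := by
  wlog hab : a ≤ b generalizing a b
  · rw [abs_sub_comm]
    exact this hb ha (le_of_not_ge hab)
  have hc : Continuous (deriv v) := hv.continuous_deriv le_rfl
  rw [sobLp_one_eq_integral (by simpa using hc), iteratedDeriv_one]
  calc |v b - v a| = |∫ x in a..b, deriv v x| := by
        rw [intervalIntegral.integral_deriv_eq_sub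
          (fun x _ => hv.differentiable one_ne_zero x) (hc.intervalIntegrable _ _)]
    _ ≤ ∫ x in a..b, |deriv v x| := intervalIntegral.abs_integral_le_integral_abs hab
    _ ≤ ∫ x in (0 : ℝ)..1, |deriv v x| :=
        intervalIntegral.integral_mono_interval ha.1 hab hb.2
          (Filter.Eventually.of_forall fun x => abs_nonneg _) (hc.abs.intervalIntegrable _ _)

lemma abs_le_sobLp_one_one_of_integral_eq_zero (hv : ContDiff ℝ 1 v)
    (hper : Function.Periodic v 1) (hmean : ∫ x in Ioc (0 : ℝ) 1, v x = 0) (x : ℝ) :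
    |v x| ≤ sobLp 1 1 v := by
  obtain ⟨y, hy, hxy⟩ := hper.exists_mem_Ico₀ one_pos x
  rw [← intervalIntegral.integral_of_le zero_le_one] at hmean
  obtain ⟨z, hz, hz_avg⟩ := exists_eq_interval_average zero_ne_one hv.continuous.continuousOn
  have hz_zero : v z = 0 := by rw [hz_avg, interval_average_eq, hmean, smul_zero]
  rw [uIoo_of_lt zero_lt_one] at hz
  simpa only [hxy, hz_zero, sub_zero] using
    abs_sub_le_sobLp_one_one hv (Ioo_subset_Icc_self hz) (Ico_subset_Icc_self hy)

end SobLp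

lemma deriv_deriv_nonpos_of_isLocalMax {g : ℝ → ℝ} {x : ℝ} (hg : ContinuousAt g x)
    (hmax : IsLocalMax g x) : deriv (deriv g) x ≤ 0 := by
  by_contra! hpos
  have hmin := isLocalMin_of_deriv_deriv_pos hpos hmax.deriv_eq_zero hg
  have hconst : g =ᶠ[nhds x] fun _ => g x := by
    filter_upwards [hmax, hmin] with y hle hge using le_antisymm hle hge
  simp [hconst.deriv.deriv_eq] at hpos

lemma deriv_nonneg_of_forall_Icc_le {g : ℝ → ℝ} {a b : ℝ} (hab : a < b)
    (hg : DifferentiableAt ℝ g b) (hmax : ∀ s ∈ Icc a b, g s ≤ g b) : 0 ≤ deriv g b := by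
  have hslope := (hasDerivWithinAt_iff_tendsto_slope' self_notMem_Iio).1
    hg.hasDerivAt.hasDerivWithinAt
  refine ge_of_tendsto hslope ?_
  filter_upwards [Ioo_mem_nhdsLT hab] with s hs
  rw [slope_def_field]
  exact div_nonneg_of_nonpos (sub_nonpos.2 (hmax s (Ioo_subset_Icc_self hs)))
    (sub_nonpos.2 hs.2.le)

lemma periodic_deriv {E : Type*} [NormedAddCommGroup E] [NormedSpace ℝ E] {v : ℝ → E} {c : ℝ}
    (hv : Function.Periodic v c) : Function.Periodic (deriv v) c := fun x => by
  rw [← deriv_comp_add_const, show (fun y => v (y + c)) = v from funext hv]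

lemma integral_comp_mul_deriv_eq_zero_of_eq {g w : ℝ → ℝ} {a b : ℝ} (hg : Continuous g)
    (hw : ContDiff ℝ 1 w) (hab : w a = w b) : ∫ x in a..b, g (w x) * deriv w x = 0 := by
  have := intervalIntegral.integral_comp_mul_deriv (a := a) (b := b)
    (fun x _ => (hw.differentiable one_ne_zero x).hasDerivAt)
    (hw.continuous_deriv le_rfl).continuousOn hg
  rwa [hab, intervalIntegral.integral_same] at this

lemma integral_mul_deriv_deriv_eq_neg {w : ℝ → ℝ} {a b : ℝ} (hw : ContDiff ℝ 2 w)
    (hab : w a = w b) (hab' : deriv w a = deriv w b) :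
    ∫ x in a..b, w x * deriv (deriv w) x = -∫ x in a..b, deriv w x ^ 2 := by
  have hw' : ContDiff ℝ 1 (deriv w) := hw.deriv'
  rw [intervalIntegral.integral_mul_deriv_eq_deriv_mul
    (fun x _ => (hw.differentiable two_ne_zero x).hasDerivAt)
    (fun x _ => (hw'.differentiable one_ne_zero x).hasDerivAt)
    (hw'.continuous.intervalIntegrable _ _)
    ((hw'.continuous_deriv le_rfl).intervalIntegrable _ _), hab, hab', sub_self, zero_sub]
  simp only [sq]

lemma hasDerivAt_intervalIntegral_of_continuousOn {E : Type*} [NormedAddCommGroup E]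
    [NormedSpace ℝ E] {F F' : ℝ → ℝ → E} {U : Set ℝ} {a b t : ℝ} (hU : IsOpen U) (ht : t ∈ U)
    (hF : ∀ s ∈ U, ContinuousOn (F s) (uIcc a b))
    (hF' : ContinuousOn (Function.uncurry F') (U ×ˢ uIcc a b))
    (hderiv : ∀ s ∈ U, ∀ x ∈ uIcc a b, HasDerivAt (fun r => F r x) (F' s x) s) :
    HasDerivAt (fun s => ∫ x in a..b, F s x) (∫ x in a..b, F' t x) t := by
  obtain ⟨K, hK, htK, hKU⟩ := exists_compact_subset hU ht
  obtain ⟨C, hC⟩ := (hK.prod isCompact_uIcc).exists_bound_of_continuousOn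
    (hF'.mono (prod_mono_left hKU))
  have hsub : uIoc a b ⊆ uIcc a b := uIoc_subset_uIcc
  have hF't : ContinuousOn (F' t) (uIcc a b) :=
    hF'.comp (f := fun x => (t, x)) (by fun_prop) fun x hx => ⟨ht, hx⟩
  refine (intervalIntegral.hasDerivAt_integral_of_dominated_loc_of_deriv_le (F' := F')
    (bound := fun _ => C) (mem_interior_iff_mem_nhds.1 htK) ?_ (hF t ht).intervalIntegrable
    ((hF't.mono hsub).aestronglyMeasurable measurableSet_uIoc) ?_ (by simp) ?_).2
  · filter_upwards [hU.mem_nhds ht] with s hs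
    exact ((hF s hs).mono hsub).aestronglyMeasurable measurableSet_uIoc
  · exact Filter.Eventually.of_forall fun x hx s hs => hC (s, x) ⟨hs, hsub hx⟩
  · exact Filter.Eventually.of_forall fun x hx s hs => hderiv s (hKU hs) x (hsub hx)

lemma le_timeAvg_of_forall_Icc_le {A : ℝ → ℝ} {T₁ S T₂ m : ℝ} (hS : T₁ ≤ S) (hT : S ≤ T₂)
    (hA : ContinuousOn A (Icc T₁ T₂)) (hA0 : ∀ t, 0 ≤ A t) (hm : ∀ t ∈ Icc T₁ S, m ≤ A t) :
    (T₂ - T₁)⁻¹ * ((S - T₁) * m) ≤ timeAvg T₁ T₂ A := by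
  have hTT : T₁ ≤ T₂ := hS.trans hT
  have hint : IntervalIntegrable A volume T₁ T₂ := hA.intervalIntegrable_of_Icc hTT
  refine mul_le_mul_of_nonneg_left ?_ (inv_nonneg.2 (sub_nonneg.2 hTT))
  calc (S - T₁) * m = ∫ _ in T₁..S, m := by rw [intervalIntegral.integral_const, smul_eq_mul]
    _ ≤ ∫ t in T₁..S, A t :=
        intervalIntegral.integral_mono_on hS intervalIntegrable_const
          ((hA.mono (Icc_subset_Icc_right hT)).intervalIntegrable_of_Icc hS) hm
    _ ≤ ∫ t in T₁..T₂, A t :=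
        intervalIntegral.integral_mono_interval le_rfl hS hT
          (Filter.Eventually.of_forall hA0) hint

section MaximumPrinciple

variable {b v : ℝ → ℝ → ℝ} {c ν M : ℝ}

lemma exists_forall_Icc_le_of_periodic {t : ℝ} (ht : 0 ≤ t) (hc : 0 < c)
    (hcont : ContinuousOn (Function.uncurry v) (Ici 0 ×ˢ univ))
    (hper : ∀ s, 0 ≤ s → Function.Periodic (v s) c) :
    ∃ t₀ ∈ Icc 0 t, ∃ x₀, ∀ s ∈ Icc 0 t, ∀ x, v s x ≤ v t₀ x₀ := by
  obtain ⟨⟨t₀, x₀⟩, hmem, hmax⟩ := ((isCompact_Icc (a := (0 : ℝ)) (b := t)).prod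
    (isCompact_Icc (a := (0 : ℝ)) (b := c))).exists_isMaxOn
    ⟨(0, 0), left_mem_Icc.2 ht, left_mem_Icc.2 hc.le⟩
    (hcont.mono (prod_mono Icc_subset_Ici_self (subset_univ _)))
  refine ⟨t₀, hmem.1, x₀, fun s hs x => ?_⟩
  obtain ⟨y, hy, hxy⟩ := (hper s hs.1).exists_mem_Ico₀ hc x
  rw [hxy]
  exact hmax (show (s, y) ∈ Icc 0 t ×ˢ Icc 0 c from ⟨hs, Ico_subset_Icc_self hy⟩)

lemma le_of_strict_subsolution (hc : 0 < c) (hν : 0 ≤ ν)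
    (hcont : ContinuousOn (Function.uncurry v) (Ici 0 ×ˢ univ))
    (hper : ∀ t, 0 ≤ t → Function.Periodic (v t) c)
    (hdiff : ∀ t, 0 < t → ∀ x, DifferentiableAt ℝ (fun s => v s x) t)
    (hsub : ∀ t, 0 < t → ∀ x,
      deriv (fun s => v s x) t + b t x * deriv (v t) x - ν * deriv (deriv (v t)) x < 0)
    (hinit : ∀ x, v 0 x ≤ M) {t : ℝ} (ht : 0 ≤ t) (x : ℝ) : v t x ≤ M := by
  obtain ⟨t₀, ht₀, x₀, hmax⟩ := exists_forall_Icc_le_of_periodic ht hc hcont hper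
  refine (hmax t (right_mem_Icc.2 ht) x).trans ?_
  rcases ht₀.1.eq_or_lt with rfl | hpos
  · exact hinit x₀
  have hxmax : IsLocalMax (v t₀) x₀ := Filter.Eventually.of_forall (hmax t₀ ht₀)
  have hcont₀ : Continuous (v t₀) :=
    hcont.comp_continuous (f := fun y => (t₀, y)) (by fun_prop) fun y => ⟨ht₀.1, mem_univ y⟩
  have hv_xx : ν * deriv (deriv (v t₀)) x₀ ≤ 0 :=
    mul_nonpos_of_nonneg_of_nonpos hν (deriv_deriv_nonpos_of_isLocalMax hcont₀.continuousAt hxmax)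
  have hv_t : 0 ≤ deriv (fun s => v s x₀) t₀ :=
    deriv_nonneg_of_forall_Icc_le hpos (hdiff t₀ hpos x₀) fun s hs =>
      hmax s ⟨hs.1, hs.2.trans ht₀.2⟩ x₀
  have hsub₀ := hsub t₀ hpos x₀
  rw [hxmax.deriv_eq_zero] at hsub₀
  linarith

lemma le_of_subsolution (hc : 0 < c) (hν : 0 ≤ ν)
    (hcont : ContinuousOn (Function.uncurry v) (Ici 0 ×ˢ univ))
    (hper : ∀ t, 0 ≤ t → Function.Periodic (v t) c)
    (hdiff : ∀ t, 0 < t → ∀ x, DifferentiableAt ℝ (fun s => v s x) t)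
    (hsub : ∀ t, 0 < t → ∀ x,
      deriv (fun s => v s x) t + b t x * deriv (v t) x - ν * deriv (deriv (v t)) x ≤ 0)
    (hinit : ∀ x, v 0 x ≤ M) {t : ℝ} (ht : 0 ≤ t) (x : ℝ) : v t x ≤ M := by
  -- Subtracting `ε * t` makes the inequality strict.
  have hperturbed : ∀ ε > 0, v t x - ε * t ≤ M := fun ε hε => by
    refine le_of_strict_subsolution (v := fun s y => v s y - ε * s) (b := b) hc hν
      (hcont.sub (by fun_prop)) (fun s hs y => by simp only [hper s hs y])
      (fun s hs y => (hdiff s hs y).sub (by fun_prop)) (fun s hs y => ?_) (by simpa using hinit)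
      ht x
    have hs_deriv : deriv (fun r => v r y - ε * r) s = deriv (fun r => v r y) s - ε := by
      rw [deriv_fun_sub (hdiff s hs y) (by fun_prop), deriv_const_mul_field, deriv_id'', mul_one]
    simp only [hs_deriv, deriv_sub_const_fun]
    linarith [hsub s hs y]
  refine le_of_forall_pos_le_add fun δ hδ => ?_
  have hδt : δ / (t + 1) * t ≤ δ := by
    rw [div_mul_eq_mul_div, div_le_iff₀ (by positivity)]
    nlinarith
  linarith [hperturbed (δ / (t + 1)) (by positivity)]

end MaximumPrinciple

/-- A classical solution on `[0, ∞) × ℝ`, `1`-periodic in space, of the viscous scalar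
conservation law `u_t + a(u) u_x = ν u_xx`, written in terms of the wave speed `a` (the derivative
of the flux) and including the inviscid case `ν = 0`. -/
structure IsPeriodicViscousSolution (a : ℝ → ℝ) (ν : ℝ) (u : ℝ → ℝ → ℝ) : Prop where
  continuous_speed : Continuous a
  viscosity_nonneg : 0 ≤ ν
  contDiffOn : ContDiffOn ℝ 2 (Function.uncurry u) (Ici 0 ×ˢ univ)
  periodic : ∀ t, 0 ≤ t → Function.Periodic (u t) 1
  equation : ∀ t, 0 < t → ∀ x,
    deriv (fun s => u s x) t + a (u t x) * deriv (u t) x - ν * deriv (deriv (u t)) x = 0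

lemma IsBurgersSolution.isPeriodicViscousSolution {f : ℝ → ℝ} {σ ν : ℝ} {u : ℝ → ℝ → ℝ}
    (h : IsBurgersSolution f σ ν u) : IsPeriodicViscousSolution (deriv f) ν u where
  continuous_speed := h.hf.continuous_deriv (by simp)
  viscosity_nonneg := h.hν.le
  contDiffOn := h.hu.of_le (WithTop.coe_le_coe.2 (le_top (a := 2)))
  periodic t _ := h.hper t
  equation := h.hpde

namespace IsPeriodicViscousSolution

variable {a : ℝ → ℝ} {ν : ℝ} {u : ℝ → ℝ → ℝ}

lemma contDiff (h : IsPeriodicViscousSolution a ν u) {t : ℝ} (ht : 0 ≤ t) : ContDiff ℝ 2 (u t) :=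
  h.contDiffOn.comp_contDiff (f := fun x => (t, x)) (by fun_prop) fun x => ⟨ht, mem_univ x⟩

lemma continuous_iteratedDeriv (h : IsPeriodicViscousSolution a ν u) {t : ℝ} (ht : 0 ≤ t) {m : ℕ}
    (hm : m ≤ 2) : Continuous (iteratedDeriv m (u t)) :=
  (h.contDiff ht).continuous_iteratedDeriv m (by exact_mod_cast hm)

lemma contDiffAt (h : IsPeriodicViscousSolution a ν u) {t : ℝ} (ht : 0 < t) (x : ℝ) :
    ContDiffAt ℝ 2 (Function.uncurry u) (t, x) :=
  h.contDiffOn.contDiffAt (prod_mem_nhds (Ici_mem_nhds ht) Filter.univ_mem)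

lemma hasDerivAt_time (h : IsPeriodicViscousSolution a ν u) {t : ℝ} (ht : 0 < t) (x : ℝ) :
    HasDerivAt (fun s => u s x) (fderiv ℝ (Function.uncurry u) (t, x) (1, 0)) t :=
  ((h.contDiffAt ht x).differentiableAt two_ne_zero).hasFDerivAt.comp_hasDerivAt
    (f := fun s => (s, x)) t ((hasDerivAt_id t).prodMk (hasDerivAt_const t x))

lemma differentiableAt_time (h : IsPeriodicViscousSolution a ν u) {t : ℝ} (ht : 0 < t) (x : ℝ) :
    DifferentiableAt ℝ (fun s => u s x) t :=
  (h.hasDerivAt_time ht x).differentiableAt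

lemma continuousOn_deriv_time (h : IsPeriodicViscousSolution a ν u) :
    ContinuousOn (Function.uncurry fun t x => deriv (fun s => u s x) t) (Ioi 0 ×ˢ univ) := by
  have hfderiv : ContinuousOn (fun z => fderiv ℝ (Function.uncurry u) z (1, 0))
      (Ioi 0 ×ˢ univ) := fun z hz =>
    (((h.contDiffAt hz.1 z.2).fderiv_right (m := 0) (by norm_num)).continuousAt.clm_apply
      continuousAt_const).continuousWithinAt
  exact hfderiv.congr fun z hz => (h.hasDerivAt_time hz.1 z.2).deriv

lemma neg (h : IsPeriodicViscousSolution a ν u) :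
    IsPeriodicViscousSolution (fun y => a (-y)) ν (fun t x => -u t x) where
  continuous_speed := h.continuous_speed.comp continuous_neg
  viscosity_nonneg := h.viscosity_nonneg
  contDiffOn := h.contDiffOn.neg
  periodic t ht x := congrArg Neg.neg (h.periodic t ht x)
  equation t ht x := by
    simp only [deriv.fun_neg', deriv.fun_neg, neg_neg]
    linarith [h.equation t ht x]

lemma le_of_initial_le (h : IsPeriodicViscousSolution a ν u) {M : ℝ} (hM : ∀ x, u 0 x ≤ M) {t : ℝ}
    (ht : 0 ≤ t) (x : ℝ) : u t x ≤ M :=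
  le_of_subsolution (b := fun t x => a (u t x)) one_pos h.viscosity_nonneg h.contDiffOn.continuousOn
    h.periodic (fun _ hs y => h.differentiableAt_time hs y) (fun s hs y => (h.equation s hs y).le)
    hM ht x

lemma abs_le_of_initial_abs_le (h : IsPeriodicViscousSolution a ν u) {M : ℝ}
    (hM : ∀ x, |u 0 x| ≤ M) {t : ℝ} (ht : 0 ≤ t) (x : ℝ) : |u t x| ≤ M :=
  abs_le'.2 ⟨h.le_of_initial_le (fun y => (abs_le'.1 (hM y)).1) ht x,
    h.neg.le_of_initial_le (fun y => (abs_le'.1 (hM y)).2) ht x⟩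

lemma continuousOn_sobLp_zero (h : IsPeriodicViscousSolution a ν u) {p : ℝ≥0∞} (hp : 1 ≤ p) :
    ContinuousOn (fun t => sobLp 0 p (u t)) (Ici 0) :=
  continuousOn_sobLp hp (by simpa only [iteratedDeriv_zero] using h.contDiffOn.continuousOn)

lemma integral_mul_deriv_time (h : IsPeriodicViscousSolution a ν u) {t : ℝ} (ht : 0 < t) :
    ∫ x in (0 : ℝ)..1, 2 * u t x * deriv (fun s => u s x) t = -(2 * ν * sobLp 1 2 (u t) ^ 2) := by
  have hC2 := h.contDiff ht.le
  have hC1 : ContDiff ℝ 1 (u t) := hC2.of_le one_le_two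
  have hu : Continuous (u t) := hC2.continuous
  have : Continuous (deriv (u t)) := hC1.continuous_deriv le_rfl
  have : Continuous (deriv (deriv (u t))) := hC2.deriv'.continuous_deriv le_rfl
  have hspeed := h.continuous_speed
  have hend : u t 0 = u t 1 := by simpa using (h.periodic t ht.le 0).symm
  have hend' : deriv (u t) 0 = deriv (u t) 1 := by
    simpa using (periodic_deriv (h.periodic t ht.le) 0).symm
  have hadvection : ∫ x in (0 : ℝ)..1, u t x * a (u t x) * deriv (u t) x = 0 :=
    integral_comp_mul_deriv_eq_zero_of_eq (g := fun y => y * a y) (by fun_prop) hC1 hend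
  have hintegrand : ∀ x, 2 * u t x * deriv (fun s => u s x) t =
      2 * ν * (u t x * deriv (deriv (u t)) x) - 2 * (u t x * a (u t x) * deriv (u t) x) :=
    fun x => by linear_combination 2 * u t x * h.equation t ht x
  simp only [hintegrand]
  rw [intervalIntegral.integral_sub (Continuous.intervalIntegrable (by fun_prop) _ _)
      (Continuous.intervalIntegrable (by fun_prop) _ _),
    intervalIntegral.integral_const_mul, intervalIntegral.integral_const_mul, hadvection,
    integral_mul_deriv_deriv_eq_neg hC2 hend hend',
    sobLp_two_sq_eq_integral (h.continuous_iteratedDeriv ht.le one_le_two), iteratedDeriv_one]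
  ring

lemma hasDerivAt_sobLp_two_sq (h : IsPeriodicViscousSolution a ν u) {t : ℝ} (ht : 0 < t) :
    HasDerivAt (fun s => sobLp 0 2 (u s) ^ 2) (-(2 * ν * sobLp 1 2 (u t) ^ 2)) t := by
  have hcont : ContinuousOn (Function.uncurry u) (Ioi 0 ×ˢ univ) :=
    h.contDiffOn.continuousOn.mono (prod_mono_left Ioi_subset_Ici_self)
  have hintegral : HasDerivAt (fun s => ∫ x in (0 : ℝ)..1, u s x ^ 2)
      (-(2 * ν * sobLp 1 2 (u t) ^ 2)) t := by
    rw [← h.integral_mul_deriv_time ht]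
    refine hasDerivAt_intervalIntegral_of_continuousOn
      (F' := fun s x => 2 * u s x * deriv (fun r => u r x) s) isOpen_Ioi ht
      (fun s hs => ((h.contDiff (le_of_lt hs)).continuous.pow 2).continuousOn)
      (((continuousOn_const.mul hcont).mul h.continuousOn_deriv_time).mono
        (prod_mono_right (subset_univ _))) fun s hs x _ => ?_
    simpa using (h.differentiableAt_time hs x).hasDerivAt.fun_pow 2
  refine hintegral.congr_of_eventuallyEq ?_
  filter_upwards [Ioi_mem_nhds ht] with s hs
  rw [sobLp_two_sq_eq_integral (h.continuous_iteratedDeriv (le_of_lt hs) zero_le_two),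
    iteratedDeriv_zero]

lemma sobLp_two_sq_sub_le (h : IsPeriodicViscousSolution a ν u) {K : ℝ}
    (hK : ∀ t, 0 < t → ν * sobLp 1 2 (u t) ^ 2 ≤ K) {t : ℝ} (ht : 0 ≤ t) :
    sobLp 0 2 (u 0) ^ 2 - 2 * K * t ≤ sobLp 0 2 (u t) ^ 2 := by
  have hderiv : ∀ s, 0 < s → HasDerivAt (fun s => sobLp 0 2 (u s) ^ 2 + 2 * K * s)
      (-(2 * ν * sobLp 1 2 (u s) ^ 2) + 2 * K * 1) s := fun s hs =>
    (h.hasDerivAt_sobLp_two_sq hs).add ((hasDerivAt_id s).const_mul (2 * K))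
  have hmono : MonotoneOn (fun s => sobLp 0 2 (u s) ^ 2 + 2 * K * s) (Ici 0) := by
    refine monotoneOn_of_deriv_nonneg (convex_Ici 0)
      (((h.continuousOn_sobLp_zero one_le_two).pow 2).add (by fun_prop))
      (fun s hs => ?_) fun s hs => ?_
    all_goals rw [interior_Ici] at hs
    · exact (hderiv s hs).differentiableAt.differentiableWithinAt
    · rw [(hderiv s hs).deriv]
      linarith [hK s hs]
  have := hmono self_mem_Ici ht ht
  simp only [mul_zero, add_zero] at this
  linarith

lemma inv_pow_three_div_four_le_sobLp_one (h : IsPeriodicViscousSolution a ν u) {D Ct : ℝ}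
    (hD : 0 < D) (hCt : 0 < Ct) (hlower : D⁻¹ ≤ sobLp 0 1 (u 0)) (hupper : ∀ x, |u 0 x| ≤ D)
    (hdiss : ∀ t, 0 < t → ν * sobLp 1 2 (u t) ^ 2 ≤ Ct) {t : ℝ} (ht : 0 ≤ t)
    (htT : t ≤ 3 / 2 * burgersT₁ D Ct) : (D ^ 3)⁻¹ / 4 ≤ sobLp 0 1 (u t) := by
  have hinitial : (D ^ 2)⁻¹ ≤ sobLp 0 2 (u 0) ^ 2 := by
    rw [← inv_pow]
    exact pow_le_pow_left₀ (by positivity) (hlower.trans (sobLp_mono_exponent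
      (h.continuous_iteratedDeriv le_rfl zero_le_two) one_le_two)) 2
  have hloss : 2 * Ct * t ≤ 3 / 4 * (D ^ 2)⁻¹ := by
    calc 2 * Ct * t ≤ 2 * Ct * (3 / 2 * burgersT₁ D Ct) := by gcongr
      _ = 3 / 4 * (D ^ 2)⁻¹ := by unfold burgersT₁; field_simp
  have henergy := h.sobLp_two_sq_sub_le hdiss ht
  have hinterp : sobLp 0 2 (u t) ^ 2 ≤ D * sobLp 0 1 (u t) :=
    sobLp_two_sq_le_mul_sobLp_one (h.continuous_iteratedDeriv ht zero_le_two) fun x _ => by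
      simpa only [iteratedDeriv_zero] using h.abs_le_of_initial_abs_le hupper ht x
  refine le_of_mul_le_mul_left ?_ hD
  calc D * ((D ^ 3)⁻¹ / 4) = (D ^ 2)⁻¹ - 3 / 4 * (D ^ 2)⁻¹ := by field_simp; norm_num
    _ ≤ D * sobLp 0 1 (u t) := by linarith

lemma sobLp_zero_one_initial_pos (h : IsPeriodicViscousSolution a ν u) (hne : ∃ x, u 0 x ≠ 0) :
    0 < sobLp 0 1 (u 0) :=
  sobLp_zero_one_pos (h.contDiff le_rfl).continuous (h.periodic 0 le_rfl) hne

lemma abs_initial_le_burgersD (h : IsPeriodicViscousSolution a ν u)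
    (hmean : ∫ x in Ioc (0 : ℝ) 1, u 0 x = 0) (x : ℝ) : |u 0 x| ≤ burgersD u :=
  calc |u 0 x| ≤ sobLp 1 1 (u 0) :=
        abs_le_sobLp_one_one_of_integral_eq_zero ((h.contDiff le_rfl).of_le one_le_two)
          (h.periodic 0 le_rfl) hmean x
    _ ≤ sobLp 1 ⊤ (u 0) :=
        sobLp_mono_exponent (h.continuous_iteratedDeriv le_rfl one_le_two) le_top
    _ ≤ burgersD u := le_max_right _ _

end IsPeriodicViscousSolution

theorem statement7_general (D Ct T₂ : ℝ) (hCt : 0 < Ct) (hT₂ : 3 / 2 * burgersT₁ D Ct ≤ T₂) :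
    ∃ c > 0, ∀ (a : ℝ → ℝ) (ν : ℝ) (u : ℝ → ℝ → ℝ), IsPeriodicViscousSolution a ν u →
      ∫ x in Ioc (0 : ℝ) 1, u 0 x = 0 → (∃ x, u 0 x ≠ 0) → burgersD u = D →
      (∀ t, 0 < t → ν * sobLp 1 2 (u t) ^ 2 ≤ Ct) →
      ∀ p : ℝ≥0∞, 1 ≤ p →
        c ≤ timeAvg (burgersT₁ D Ct) T₂ (fun t => sobLp 0 p (u t) ^ 2) := by
  rcases le_or_gt D 0 with hD | hD
  · refine ⟨1, one_pos, fun a ν u h _ hne hDu => absurd hD (not_le.2 ?_)⟩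
    exact hDu ▸ lt_max_of_lt_left (inv_pos.2 (h.sobLp_zero_one_initial_pos hne))
  have hT₁ : 0 < burgersT₁ D Ct := by unfold burgersT₁; positivity
  have hlen : 0 < T₂ - burgersT₁ D Ct := by linarith
  refine ⟨(T₂ - burgersT₁ D Ct)⁻¹ *
      ((3 / 2 * burgersT₁ D Ct - burgersT₁ D Ct) * ((D ^ 3)⁻¹ / 4) ^ 2),
    mul_pos (inv_pos.2 hlen) (mul_pos (by linarith) (by positivity)),
    fun a ν u h hmean hne hDu hdiss p hp => ?_⟩
  refine le_timeAvg_of_forall_Icc_le (by linarith) hT₂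
    (((h.continuousOn_sobLp_zero hp).pow 2).mono (Icc_subset_Ici_self.trans
      (Ici_subset_Ici.2 hT₁.le))) (fun t => sq_nonneg _) fun t ht => ?_
  have ht0 : 0 ≤ t := hT₁.le.trans ht.1
  have hlower : D⁻¹ ≤ sobLp 0 1 (u 0) :=
    inv_le_of_inv_le₀ (h.sobLp_zero_one_initial_pos hne) (hDu ▸ le_max_left _ _)
  have hL1 : (D ^ 3)⁻¹ / 4 ≤ sobLp 0 1 (u t) := h.inv_pow_three_div_four_le_sobLp_one hD hCt hlower
    (hDu ▸ h.abs_initial_le_burgersD hmean) hdiss ht0 ht.2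
  exact pow_le_pow_left₀ (by positivity) (hL1.trans
    (sobLp_mono_exponent (h.continuous_iteratedDeriv ht0 zero_le_two) hp)) 2

/-- For every `p ∈ [1,∞]` there is `c > 0` depending only on `f`,
`D`, `p` such that for every `ν ∈ (0,1]`, the time average over `[T₁,T₂]`
satisfies `{|u(t)|_{L^p}²} ≥ c`. -/
theorem statement7 (f : ℝ → ℝ) (σ D Ct : ℝ) (hCt : 0 < Ct)
    (hCtb : ∀ ν, 0 < ν → ν ≤ 1 →
      ∀ u : ℝ → ℝ → ℝ, IsBurgersSolution f σ ν u → burgersD u = D →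
        ∀ t, 0 ≤ t → sobLp 1 2 (u t) ^ 2 ≤ Ct * ν⁻¹)
    (p : ℝ≥0∞) (hp : 1 ≤ p) :
    ∃ c > 0, ∀ ν, 0 < ν → ν ≤ 1 →
      ∀ u : ℝ → ℝ → ℝ, IsBurgersSolution f σ ν u → burgersD u = D →
        c ≤ timeAvg (burgersT₁ D Ct) (burgersT₂ σ D Ct)
              (fun t => sobLp 0 p (u t) ^ 2) := by
  obtain ⟨c, hc, hbound⟩ := statement7_general D Ct (burgersT₂ σ D Ct) hCt (le_max_left _ _)
  exact ⟨c, hc, fun ν hν hν1 u hu hDu => hbound _ ν u hu.isPeriodicViscousSolution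
    (hu.hmean 0 le_rfl) hu.hinit hDu
    (fun t ht => (le_mul_inv_iff₀' hν).1 (hCtb ν hν hν1 u hu hDu t ht.le)) p hp⟩
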